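/- For the polytope P = P_{a₁,...,a_{2k-1}} with k ≥ 2, the bigraded Betti numbers of its moment-angle manifold satisfy: β^{0,0} = 1; β^{-1,2j} = #{i : aᵢ+...+a_{i+k-2} = j}; β^{-2,2j} = #{i : aᵢ+...+a_{i+k-1} = j}; β^{-3,2(n+3)} = 1; all other β^{-q,2p} = 0. In particular Σⱼ β^{-1,2j} = Σⱼ β^{-2,2j} = 2k-1. -/

import Mathlib

/-! Bigraded Betti numbers `β^{-q,2p}` of the moment-angle complex of a simplicial
complex `K` on vertex set `Fin N`, defined (following Hochster / the Koszul-type complex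
`Λ[u₁,...,u_N] ⊗ ℚ[K]` of the paper) as the sum over all multidegrees `τ` of cardinality
`p` of the dimension of the `q`-th homology of the multigraded component complex, whose
basis in homological degree `q` consists of the monomials `u_ω v_{τ∖ω}` with `ω ⊆ τ`,
`|ω| = q` and `τ∖ω ∈ K`. -/

/-- The multidegree-`τ`, homological degree `q` component of the complex
`Λ[u] ⊗ ℚ[K]`. -/
abbrev CSpace (N : ℕ) (K : Finset (Finset (Fin N))) (τ : Finset (Fin N)) (q : ℕ) :=
  {ω : Finset (Fin N) // ω ⊆ τ ∧ ω.card = q ∧ τ \ ω ∈ K} → ℚ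

/-- Matrix of the differential `d(u_ω v_σ) = ∑_{i ∈ ω} ± u_{ω∖i} v_{σ∪i}` from degree
`q+1` to degree `q` in multidegree `τ`. -/
noncomputable def diffMat (N : ℕ) (K : Finset (Finset (Fin N))) (τ : Finset (Fin N))
    (q : ℕ) :
    Matrix {ω : Finset (Fin N) // ω ⊆ τ ∧ ω.card = q ∧ τ \ ω ∈ K}
      {ω : Finset (Fin N) // ω ⊆ τ ∧ ω.card = q + 1 ∧ τ \ ω ∈ K} ℚ :=
  fun ω ω' =>
    if ω.1 ⊆ ω'.1 then
      (-1 : ℚ) ^ (ω.1.filter (fun x => ∀ i ∈ ω'.1 \ ω.1, x < i)).card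
    else 0

/-- The differential of the multigraded component complex. -/
noncomputable def diff (N : ℕ) (K : Finset (Finset (Fin N))) (τ : Finset (Fin N))
    (q : ℕ) : CSpace N K τ (q + 1) →ₗ[ℚ] CSpace N K τ q :=
  Matrix.toLin' (diffMat N K τ q)

/-- The cocycles (cycles) in homological degree `q`. -/
noncomputable def cocycles (N : ℕ) (K : Finset (Finset (Fin N))) (τ : Finset (Fin N)) :
    (q : ℕ) → Submodule ℚ (CSpace N K τ q)
  | 0 => ⊤
  | q + 1 => LinearMap.ker (diff N K τ q)

/-- The bigraded Betti number `β^{-q,2p}` of the moment-angle complex of `K`. -/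
noncomputable def bettiNum (N : ℕ) (K : Finset (Finset (Fin N))) (q p : ℕ) : ℕ :=
  ∑ τ ∈ Finset.univ.filter (fun τ : Finset (Fin N) => τ.card = p),
    Module.finrank ℚ
      (↥(cocycles N K τ q) ⧸
        Submodule.comap (cocycles N K τ q).subtype (LinearMap.range (diff N K τ q)))

/-- The boundary complex of the dual of `P_{a₁,...,a_{2k-1}}`: vertices are labeled by
`c : Fin N → ZMod (2k-1)` (with `aᵢ` vertices labeled `i`), and a subset is a face iff it
does not contain all vertices whose labels lie in some arc `{i, i+1, ..., i+k-2}`. -/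
noncomputable def galeComplex (k m' N : ℕ) [NeZero m'] (c : Fin N → ZMod m') :
    Finset (Finset (Fin N)) :=
  Finset.univ.filter (fun σ : Finset (Fin N) =>
    ¬ ∃ i : ZMod m', ∀ x : Fin N, (c x - i).val ≤ k - 2 → x ∈ σ)

/-! In multidegree `τ`, the complex `Λ[u] ⊗ ℚ[K]` is spanned by the `w ⊆ τ` with `τ \ w ∈ K`. For
the Gale complex these are the subsets of `τ` that meet every arc of `k - 1` consecutive labels
contained in `τ`. A family of sets stable under adding and removing a fixed vertex `x` is acyclic,
contraction with `u_x` being a contracting homotopy, and discarding such an acyclic family, when it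
is cut out by an upward closed condition, does not change homology. If a vertex of `τ` lies in no
arc inside `τ`, everything is discarded at once. Otherwise `τ` is empty, the whole circle, or a
single arc of length `k - 1 + d` with `d < k`. There the same device leaves the transversals of a
partition into `0`, `1`, `2` or `3` blocks (empty `τ`, arcs with `d = 0`, arcs with `d = 1`, whole
circle), which reduce further to one monomial, or, for `d ≥ 2`, an acyclic family. -/

section KoszulDifferential

open Finset

variable {α : Type*} [LinearOrder α] (R : Type*) [CommRing R]

/-- The sign relating `u_i ∧ u_w` to the exterior monomial `u_{w ∪ {i}}`, for `i ∉ w`. -/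
def koszulSign (i : α) (w : Finset α) : R := (-1) ^ #{x ∈ w | x < i}

variable {R}

theorem koszulSign_mul_self (i : α) (w : Finset α) :
    koszulSign R i w * koszulSign R i w = 1 := by
  rw [koszulSign, ← mul_pow, neg_one_mul, neg_neg, one_pow]

theorem koszulSign_insert {i j : α} {w : Finset α} (hi : i ∉ w) :
    koszulSign R j (insert i w) = if i < j then -koszulSign R j w else koszulSign R j w := by
  unfold koszulSign
  rw [filter_insert]
  split_ifs
  · rw [card_insert_of_notMem (by simp [hi]), pow_succ, mul_neg_one]
  · rfl

theorem koszulSign_mul_koszulSign_insert {i j : α} {w : Finset α} (hi : i ∉ w) (hj : j ∉ w)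
    (hij : i ≠ j) :
    koszulSign R i w * koszulSign R j (insert i w) =
      -(koszulSign R j w * koszulSign R i (insert j w)) := by
  rw [koszulSign_insert hi, koszulSign_insert hj]
  rcases hij.lt_or_gt with h | h
  · rw [if_pos h, if_neg h.asymm]; ring
  · rw [if_neg h.asymm, if_pos h]; ring

theorem koszulSign_insert_mul_koszulSign_insert {i j : α} {w : Finset α} (hi : i ∉ w)
    (hj : j ∉ w) (hij : i ≠ j) :
    koszulSign R i (insert j w) * koszulSign R j (insert i w) =
      -(koszulSign R j w * koszulSign R i w) := by
  rw [koszulSign_insert hi, koszulSign_insert hj]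
  rcases hij.lt_or_gt with h | h
  · rw [if_pos h, if_neg h.asymm]; ring
  · rw [if_neg h.asymm, if_pos h]; ring

/-- Contraction with the generator `u_x`, up to sign: a contracting homotopy of `koszulDiff`. -/
def koszulHomotopy (x : α) (z : Finset α → R) : Finset α → R :=
  fun w => if x ∈ w then koszulSign R x (w.erase x) * z (w.erase x) else 0

theorem koszulHomotopy_of_mem {x : α} {w : Finset α} (hx : x ∈ w) (z : Finset α → R) :
    koszulHomotopy x z w = koszulSign R x (w.erase x) * z (w.erase x) := if_pos hx

theorem koszulHomotopy_of_notMem {x : α} {w : Finset α} (hx : x ∉ w) (z : Finset α → R) :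
    koszulHomotopy x z w = 0 := if_neg hx

theorem koszulHomotopy_insert {x : α} {w : Finset α} (hx : x ∉ w) (z : Finset α → R) :
    koszulHomotopy x z (insert x w) = koszulSign R x w * z w := by
  rw [koszulHomotopy_of_mem (mem_insert_self x w), erase_insert hx]

variable [Fintype α]

variable (R) in
/-- The differential `d u_w = ∑_{i ∈ w} ± u_{w ∖ i}` of the full Koszul complex. An element is
encoded by its coefficient function `z`, so that the coefficient of `u_w` in `d z` collects the
coefficients of the `u_{w ∪ i}`. -/
def koszulDiff : (Finset α → R) →ₗ[R] (Finset α → R) where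
  toFun z w := ∑ i ∈ wᶜ, koszulSign R i w * z (insert i w)
  map_add' y z := by
    funext w
    simp only [Pi.add_apply, mul_add, sum_add_distrib]
  map_smul' r z := by
    funext w
    simp only [Pi.smul_apply, smul_eq_mul, RingHom.id_apply, mul_sum, mul_left_comm]

theorem koszulDiff_apply (z : Finset α → R) (w : Finset α) :
    koszulDiff R z w = ∑ i ∈ wᶜ, koszulSign R i w * z (insert i w) := rfl

theorem koszulDiff_congr {y z : Finset α → R} {w : Finset α}
    (h : ∀ i ∉ w, y (insert i w) = z (insert i w)) : koszulDiff R y w = koszulDiff R z w :=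
  sum_congr rfl fun i hi => by rw [h i (mem_compl.1 hi)]

theorem koszulDiff_eq_zero {z : Finset α → R} {w : Finset α}
    (h : ∀ i ∉ w, z (insert i w) = 0) : koszulDiff R z w = 0 :=
  sum_eq_zero fun i hi => by rw [h i (mem_compl.1 hi), mul_zero]

theorem koszulDiff_koszulDiff (z : Finset α → R) : koszulDiff R (koszulDiff R z) = 0 := by
  funext w
  simp only [koszulDiff_apply, mul_sum, sum_sigma', Pi.zero_apply]
  refine sum_involution (fun p _ => ⟨p.2, p.1⟩) ?_ ?_ ?_ fun _ _ => rfl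
  all_goals
    rintro ⟨i, j⟩ h
    simp only [mem_sigma, mem_compl, mem_insert, not_or] at h
    obtain ⟨hi, hji, hj⟩ := h
  · rw [insert_comm j i]
    linear_combination
      z (insert i (insert j w)) * koszulSign_mul_koszulSign_insert (R := R) hi hj (Ne.symm hji)
  · exact fun _ h => hji (congrArg Sigma.fst h)
  · simp [hi, hj, Ne.symm hji]

theorem koszulDiff_koszulHomotopy_add (x : α) (z : Finset α → R) :
    koszulDiff R (koszulHomotopy x z) + koszulHomotopy x (koszulDiff R z) = z := by
  funext w
  rw [Pi.add_apply]
  by_cases hx : x ∈ w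
  · obtain ⟨v, hv, rfl⟩ : ∃ v, x ∉ v ∧ insert x v = w :=
      ⟨w.erase x, notMem_erase x w, insert_erase hx⟩
    rw [koszulHomotopy_insert hv, koszulDiff_apply, koszulDiff_apply, compl_insert,
      ← add_sum_erase _ _ (mem_compl.2 hv), mul_add, ← mul_assoc, koszulSign_mul_self, one_mul,
      add_left_comm, mul_sum, ← sum_add_distrib, sum_eq_zero, add_zero]
    intro i hi
    rw [mem_erase, mem_compl] at hi
    rw [insert_comm, koszulHomotopy_insert (by simp [hv, hi.1.symm])]
    linear_combination
      z (insert i v) * koszulSign_insert_mul_koszulSign_insert (R := R) hi.2 hv hi.1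
  · rw [koszulHomotopy_of_notMem hx, add_zero, koszulDiff_apply,
      sum_eq_single_of_mem x (mem_compl.2 hx), koszulHomotopy_insert hx, ← mul_assoc,
      koszulSign_mul_self, one_mul]
    intro i _ hix
    rw [koszulHomotopy_of_notMem (by simp [hx, hix.symm]), mul_zero]

end KoszulDifferential

section FamilyChains

open Finset

variable {α : Type*} (R : Type*) [CommRing R]

/-- The combinations of the monomials `u_w` with `w ∈ F` of cardinality `q`. -/
def familyChains (F : Set (Finset α)) (q : ℕ) : Submodule R (Finset α → R) where
  carrier := {z | ∀ w, z w ≠ 0 → w ∈ F ∧ #w = q}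
  zero_mem' := fun _ h => absurd rfl h
  add_mem' := fun {y z} hy hz w h => by
    by_cases hyw : y w = 0
    · exact hz w fun hzw => h (by rw [Pi.add_apply, hyw, hzw, add_zero])
    · exact hy w hyw
  smul_mem' := fun r z hz w h => hz w (right_ne_zero_of_mul h)

variable {R} {F G U : Set (Finset α)} {q : ℕ} {z : Finset α → R} {w : Finset α} {x : α}

theorem eq_zero_of_mem_familyChains (hz : z ∈ familyChains R F q) (hw : w ∉ F) : z w = 0 :=
  by_contra fun h => hw (hz w h).1

theorem familyChains_mono (h : G ⊆ F) :
    familyChains R G q ≤ familyChains R F q := fun _ hz w hw => ⟨h (hz w hw).1, (hz w hw).2⟩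

variable [DecidableEq α]

/-- Membership in `F` is not affected by adding or removing `x`. Pairing `w` with `w ∪ {x}` is then
a matching of `F` in the sense of discrete Morse theory. -/
def IsToggleInvariant (x : α) (F : Set (Finset α)) : Prop :=
  ∀ w, x ∉ w → (w ∈ F ↔ insert x w ∈ F)

theorem IsToggleInvariant.erase_mem_iff (hF : IsToggleInvariant x F) :
    w.erase x ∈ F ↔ w ∈ F := by
  by_cases hx : x ∈ w
  · rw [hF _ (notMem_erase x w), insert_erase hx]
  · rw [erase_eq_of_notMem hx]

end FamilyChains

section FamilyHomology

open Finset

variable {α : Type*} [LinearOrder α] [Fintype α] (R : Type*) [CommRing R]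

/-- The differential induced by `koszulDiff` on the span of the monomials `u_w`, `w ∈ F`: project
back to `F` after differentiating. It squares to zero on this span when `F` is order-connected,
the span being then a subquotient of the Koszul complex. -/
noncomputable def familyDiff (F : Set (Finset α)) : (Finset α → R) →ₗ[R] (Finset α → R) where
  toFun z := F.indicator (koszulDiff R z)
  map_add' y z := by rw [map_add]; exact Set.indicator_add F _ _
  map_smul' r z := by rw [map_smul]; exact Set.indicator_const_smul F r _

/-- The cycles of degree `q` of the complex spanned by the family `F`. -/
noncomputable def familyCycles (F : Set (Finset α)) (q : ℕ) : Submodule R (Finset α → R) :=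
  familyChains R F q ⊓ LinearMap.ker (familyDiff R F)

/-- The boundaries of degree `q` of the complex spanned by the family `F`. -/
noncomputable def familyBoundaries (F : Set (Finset α)) (q : ℕ) : Submodule R (Finset α → R) :=
  (familyChains R F (q + 1)).map (familyDiff R F)

/-- The rank of the `q`-th homology of the complex spanned by the family `F`. -/
noncomputable def homologyRank (F : Set (Finset α)) (q : ℕ) : ℕ :=
  Module.finrank R (familyCycles R F q ⧸ (familyBoundaries R F q).submoduleOf (familyCycles R F q))

variable {R} {F U : Set (Finset α)} {q : ℕ} {z : Finset α → R} {w : Finset α} {x : α}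

theorem familyDiff_of_mem (hw : w ∈ F) (z : Finset α → R) :
    familyDiff R F z w = koszulDiff R z w := Set.indicator_of_mem hw _

theorem familyDiff_of_notMem (hw : w ∉ F) (z : Finset α → R) : familyDiff R F z w = 0 :=
  Set.indicator_of_notMem hw _

theorem familyDiff_eq_zero_iff : familyDiff R F z = 0 ↔ ∀ w ∈ F, koszulDiff R z w = 0 :=
  Set.indicator_eq_zero'.trans Set.disjoint_right |>.trans <| by simp

theorem familyDiff_mem_familyChains (hz : z ∈ familyChains R F (q + 1)) :
    familyDiff R F z ∈ familyChains R F q := by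
  intro w h
  have hw : w ∈ F := by_contra fun hw => h (familyDiff_of_notMem hw z)
  refine ⟨hw, by_contra fun hq => h ?_⟩
  rw [familyDiff_of_mem hw]
  refine koszulDiff_eq_zero fun i hi => by_contra fun hzi => hq ?_
  simpa [card_insert_of_notMem hi] using (hz _ hzi).2

theorem familyDiff_familyDiff (hF : F.OrdConnected) (hz : z ∈ familyChains R F q) :
    familyDiff R F (familyDiff R F z) = 0 := by
  rw [familyDiff_eq_zero_iff]
  intro w hw
  rw [← Pi.zero_apply (M := fun _ => R) w, ← koszulDiff_koszulDiff z]
  refine koszulDiff_congr fun i _ => ?_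
  by_cases hiF : insert i w ∈ F
  · exact familyDiff_of_mem hiF z
  · rw [familyDiff_of_notMem hiF]
    refine (koszulDiff_eq_zero fun j _ => eq_zero_of_mem_familyChains hz fun hjF => hiF ?_).symm
    exact hF.out hw hjF ⟨subset_insert i w, subset_insert j _⟩

theorem mem_familyCycles :
    z ∈ familyCycles R F q ↔ z ∈ familyChains R F q ∧ ∀ w ∈ F, koszulDiff R z w = 0 :=
  and_congr_right fun _ => familyDiff_eq_zero_iff

theorem familyBoundaries_le_familyCycles (hF : F.OrdConnected) :
    familyBoundaries R F q ≤ familyCycles R F q := by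
  rintro _ ⟨y, hy, rfl⟩
  exact ⟨familyDiff_mem_familyChains hy, familyDiff_familyDiff hF hy⟩

theorem IsToggleInvariant.familyCycles_le_familyBoundaries (hF : IsToggleInvariant x F) :
    familyCycles R F q ≤ familyBoundaries R F q := by
  intro z hz
  obtain ⟨hzF, hdz⟩ := mem_familyCycles.1 hz
  refine ⟨koszulHomotopy x z, fun w h => ?_, ?_⟩
  · have hx : x ∈ w := by_contra fun hx => h (koszulHomotopy_of_notMem hx z)
    rw [koszulHomotopy_of_mem hx] at h
    obtain ⟨hw, hcard⟩ := hzF _ (right_ne_zero_of_mul h)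
    exact ⟨hF.erase_mem_iff.1 hw, by rw [← hcard, card_erase_add_one hx]⟩
  · funext w
    by_cases hw : w ∈ F
    · have hdz' : koszulHomotopy x (koszulDiff R z) w = 0 := by
        by_cases hx : x ∈ w
        · rw [koszulHomotopy_of_mem hx, hdz _ (hF.erase_mem_iff.2 hw), mul_zero]
        · exact koszulHomotopy_of_notMem hx _
      rw [familyDiff_of_mem hw]
      simpa only [Pi.add_apply, hdz', add_zero] using
        congrFun (koszulDiff_koszulHomotopy_add x z) w
    · rw [familyDiff_of_notMem hw, eq_zero_of_mem_familyChains hzF hw]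

theorem koszulDiff_eq_zero_of_isUpperSet (hU : IsUpperSet U)
    (hz : z ∈ familyChains R (F \ U) q) (hw : w ∈ U) : koszulDiff R z w = 0 :=
  koszulDiff_eq_zero fun i _ =>
    eq_zero_of_mem_familyChains hz fun h => h.2 (hU (subset_insert i w) hw)

theorem familyDiff_sdiff_of_isUpperSet (hU : IsUpperSet U)
    (hz : z ∈ familyChains R (F \ U) q) : familyDiff R (F \ U) z = familyDiff R F z := by
  funext w
  by_cases hw : w ∈ F
  · rw [familyDiff_of_mem hw]
    by_cases hwU : w ∈ U
    · rw [familyDiff_of_notMem fun h => h.2 hwU, koszulDiff_eq_zero_of_isUpperSet hU hz hwU]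
    · exact familyDiff_of_mem (F := F \ U) ⟨hw, hwU⟩ z
  · rw [familyDiff_of_notMem hw, familyDiff_of_notMem fun h => hw h.1]

theorem familyCycles_sdiff_le (hU : IsUpperSet U) :
    familyCycles R (F \ U) q ≤ familyCycles R F q := by
  rintro z ⟨hz, hdz⟩
  refine ⟨familyChains_mono Set.sdiff_subset hz, LinearMap.mem_ker.2 ?_⟩
  rw [← familyDiff_sdiff_of_isUpperSet hU hz]
  exact hdz

theorem familyBoundaries_sdiff_le (hU : IsUpperSet U) :
    familyBoundaries R (F \ U) q ≤ familyBoundaries R F q := by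
  rintro _ ⟨y, hy, rfl⟩
  exact ⟨y, familyChains_mono Set.sdiff_subset hy, (familyDiff_sdiff_of_isUpperSet hU hy).symm⟩

-- The part of `z` lying in `U` is a cycle of the acyclic family `F ∩ U`.
theorem exists_sub_familyDiff_mem_familyChains_sdiff (hU : IsUpperSet U)
    (hx : IsToggleInvariant x (F ∩ U)) (hz : z ∈ familyChains R F q)
    (hdz : ∀ w ∈ F ∩ U, koszulDiff R z w = 0) :
    ∃ y ∈ familyChains R F (q + 1), z - familyDiff R F y ∈ familyChains R (F \ U) q := by
  have hcycle : U.indicator z ∈ familyCycles R (F ∩ U) q := by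
    refine mem_familyCycles.2 ⟨fun w hw => ?_, fun w hw => ?_⟩
    · have hwz := hz w (Set.indicator_of_mem (Set.mem_of_indicator_ne_zero hw) z ▸ hw)
      exact ⟨⟨hwz.1, Set.mem_of_indicator_ne_zero hw⟩, hwz.2⟩
    · rw [← hdz w hw]
      exact koszulDiff_congr fun i _ =>
        Set.indicator_of_mem (hU (subset_insert i w) hw.2) z
  obtain ⟨y, hy, hyz⟩ := hx.familyCycles_le_familyBoundaries hcycle
  have hyF : y ∈ familyChains R F (q + 1) := familyChains_mono Set.inter_subset_left hy
  refine ⟨y, hyF, fun w hw => ?_⟩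
  obtain ⟨hwF, hcard⟩ := (familyChains R F q).sub_mem hz (familyDiff_mem_familyChains hyF) w hw
  refine ⟨⟨hwF, fun hwU => hw ?_⟩, hcard⟩
  have hyw := congrFun hyz w
  rw [familyDiff_of_mem (F := F ∩ U) ⟨hwF, hwU⟩, Set.indicator_of_mem hwU] at hyw
  rw [Pi.sub_apply, familyDiff_of_mem hwF, hyw, sub_self]

theorem familyCycles_eq_sup (hF : F.OrdConnected) (hU : IsUpperSet U)
    (hx : IsToggleInvariant x (F ∩ U)) :
    familyCycles R F q = familyCycles R (F \ U) q ⊔ familyBoundaries R F q := by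
  refine le_antisymm (fun z hz => ?_)
    (sup_le (familyCycles_sdiff_le hU) (familyBoundaries_le_familyCycles hF))
  obtain ⟨hzF, hdz⟩ := hz
  obtain ⟨y, hy, hyz⟩ := exists_sub_familyDiff_mem_familyChains_sdiff hU hx hzF
    fun w hw => familyDiff_eq_zero_iff.1 hdz w hw.1
  have hcycle : familyDiff R (F \ U) (z - familyDiff R F y) = 0 := by
    rw [familyDiff_sdiff_of_isUpperSet hU hyz, map_sub, LinearMap.mem_ker.1 hdz,
      familyDiff_familyDiff hF hy, sub_zero]
  rw [← sub_add_cancel z (familyDiff R F y)]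
  exact Submodule.add_mem_sup ⟨hyz, hcycle⟩ ⟨y, hy, rfl⟩

theorem familyBoundaries_sdiff_eq_inf (hF : F.OrdConnected) (hU : IsUpperSet U)
    (hx : IsToggleInvariant x (F ∩ U)) :
    familyBoundaries R (F \ U) q = familyCycles R (F \ U) q ⊓ familyBoundaries R F q := by
  have hFU : (F \ U).OrdConnected := hF.inter hU.compl.ordConnected
  refine le_antisymm
    (le_inf (familyBoundaries_le_familyCycles hFU) (familyBoundaries_sdiff_le hU)) ?_
  rintro _ ⟨hz, y, hy, rfl⟩
  obtain ⟨v, hv, hvy⟩ := exists_sub_familyDiff_mem_familyChains_sdiff hU hx hy fun w hw => by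
    rw [← familyDiff_of_mem hw.1]
    exact eq_zero_of_mem_familyChains hz.1 fun h => h.2 hw.2
  refine ⟨y - familyDiff R F v, hvy, ?_⟩
  rw [familyDiff_sdiff_of_isUpperSet hU hvy, map_sub, familyDiff_familyDiff hF hv, sub_zero]

variable (R)

-- Second isomorphism theorem for the cycles of `F \ U` and the boundaries of `F`.
theorem homologyRank_sdiff (hF : F.OrdConnected) (hU : IsUpperSet U)
    (hx : IsToggleInvariant x (F ∩ U)) (q : ℕ) :
    homologyRank R (F \ U) q = homologyRank R F q := by
  have e :=
    LinearMap.quotientInfEquivSupQuotient (familyCycles R (F \ U) q) (familyBoundaries R F q)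
  rw [← Submodule.comap_inf, ← familyBoundaries_sdiff_eq_inf hF hU hx,
    ← familyCycles_eq_sup hF hU hx] at e
  exact e.finrank_eq

theorem homologyRank_eq_zero_of_isToggleInvariant [Nontrivial R] (hF : IsToggleInvariant x F)
    (q : ℕ) : homologyRank R F q = 0 := by
  have : Subsingleton
      (familyCycles R F q ⧸ (familyBoundaries R F q).submoduleOf (familyCycles R F q)) :=
    Submodule.Quotient.subsingleton_iff.2
      (Submodule.submoduleOf_eq_top.2 hF.familyCycles_le_familyBoundaries)
  exact Module.finrank_zero_of_subsingleton

theorem single_mem_familyCycles_singleton (v : Finset α) (r : R) :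
    Pi.single v r ∈ familyCycles R {v} #v := by
  refine mem_familyCycles.2 ⟨fun w hw => ?_, ?_⟩
  · obtain rfl : w = v := by_contra fun h => hw (Pi.single_eq_of_ne (M := fun _ => R) h r)
    exact ⟨rfl, rfl⟩
  · rintro _ rfl
    exact koszulDiff_eq_zero fun i hi =>
      Pi.single_eq_of_ne (M := fun _ => R) (insert_ne_self.2 hi) r

/-- The cycles of `{v}` in degree `#v` are the multiples of the single monomial `u_v`. -/
noncomputable def familyCyclesSingletonEquiv (v : Finset α) : familyCycles R {v} #v ≃ₗ[R] R :=
  LinearEquiv.ofBijective (LinearMap.proj v ∘ₗ (familyCycles R {v} #v).subtype) <| by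
    refine ⟨(injective_iff_map_eq_zero _).2 fun z hz => Subtype.ext <| funext fun w => ?_,
      fun r => ⟨⟨_, single_mem_familyCycles_singleton R v r⟩,
        Pi.single_eq_same (M := fun _ => R) v r⟩⟩
    by_cases hw : w = v
    · rw [hw]; exact hz
    · exact eq_zero_of_mem_familyChains z.2.1 hw

theorem homologyRank_singleton [Nontrivial R] (v : Finset α) (q : ℕ) :
    homologyRank R {v} q = if q = #v then 1 else 0 := by
  have hchains {p : ℕ} (hp : p ≠ #v) : familyChains R {v} p = ⊥ :=
    (Submodule.eq_bot_iff _).2 fun z hz => funext fun w => by_contra fun hw =>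
      hp (by rw [← (hz w hw).2, Set.mem_singleton_iff.1 (hz w hw).1])
  split_ifs with hq
  · subst hq
    have hbot : familyBoundaries R {v} #v = ⊥ := by
      rw [familyBoundaries, hchains (Nat.succ_ne_self _), Submodule.map_bot]
    rw [homologyRank, hbot, Submodule.submoduleOf, Submodule.comap_bot, Submodule.ker_subtype,
      (Submodule.quotEquivOfEqBot _ rfl).finrank_eq,
      (familyCyclesSingletonEquiv R v).finrank_eq, Module.finrank_self]
  · have hbot : familyCycles R {v} q = ⊥ := by rw [familyCycles, hchains hq, bot_inf_eq]
    have : Subsingleton (familyCycles R {v} q) := by rw [hbot]; infer_instance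
    exact Module.finrank_zero_of_subsingleton

end FamilyHomology

section Transversals

open Finset

variable {α β ι : Type*}

/-- The subsets of `τ` that meet every fibre of the restriction of `f` to `τ`. -/
def fiberTransversals (f : α → β) (τ : Finset α) : Set (Finset α) :=
  {w | w ⊆ τ ∧ ∀ x ∈ τ, ∃ y ∈ w, f y = f x}

/-- The subsets of `τ` that meet every block `B i` contained in `τ`. -/
def transversals (B : ι → Finset α) (τ : Finset α) : Set (Finset α) :=
  {w | w ⊆ τ ∧ ∀ i, B i ⊆ τ → ∃ x ∈ w, x ∈ B i}

variable {f : α → β} {B : ι → Finset α} {τ : Finset α} {x y : α}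

theorem isUpperSet_exists_mem (p : α → Prop) :
    IsUpperSet {w : Finset α | ∃ y ∈ w, p y} :=
  fun _ _ hvw ⟨y, hy, hpy⟩ => ⟨y, hvw hy, hpy⟩

theorem ordConnected_fiberTransversals : (fiberTransversals f τ).OrdConnected :=
  ⟨fun _ hv _ hu _ hw => ⟨hw.2.trans hu.1, fun x hx =>
    let ⟨y, hy, hyx⟩ := hv.2 x hx; ⟨y, hw.1 hy, hyx⟩⟩⟩

theorem ordConnected_transversals : (transversals B τ).OrdConnected :=
  ⟨fun _ hv _ hu _ hw => ⟨hw.2.trans hu.1, fun i hi =>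
    let ⟨y, hy, hyi⟩ := hv.2 i hi; ⟨y, hw.1 hy, hyi⟩⟩⟩

theorem fiberTransversals_eq_singleton (hf : Set.InjOn f τ) : fiberTransversals f τ = {τ} := by
  ext w
  refine ⟨fun ⟨hw, hmeet⟩ => hw.antisymm fun x hx => ?_, ?_⟩
  · obtain ⟨y, hy, hyx⟩ := hmeet x hx
    exact hf (hw hy) hx hyx ▸ hy
  · rintro rfl
    exact ⟨Subset.rfl, fun x hx => ⟨x, hx, rfl⟩⟩

variable [DecidableEq α]

theorem fiberTransversals_sdiff (hx : x ∈ τ) (hxy : x ≠ y) (hf : f x = f y) :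
    fiberTransversals f τ \ {w | ∃ u ∈ w, u = y} = fiberTransversals f (τ.erase y) := by
  ext w
  simp only [Set.mem_sdiff, Set.mem_ofPred_eq, exists_eq_right, fiberTransversals, subset_erase]
  refine ⟨fun ⟨⟨hw, hmeet⟩, hy⟩ => ⟨⟨hw, hy⟩, fun u hu => hmeet u (mem_of_mem_erase hu)⟩,
    fun ⟨⟨hw, hy⟩, hmeet⟩ => ⟨⟨hw, fun u hu => ?_⟩, hy⟩⟩
  by_cases huy : u = y
  · rw [huy, ← hf]
    exact hmeet x (mem_erase.2 ⟨hxy, hx⟩)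
  · exact hmeet u (mem_erase.2 ⟨huy, hu⟩)

theorem isToggleInvariant_fiberTransversals_inter (hx : x ∈ τ) (hxy : x ≠ y) (hf : f x = f y) :
    IsToggleInvariant x (fiberTransversals f τ ∩ {w | ∃ u ∈ w, u = y}) := by
  intro w _
  simp only [Set.mem_inter_iff, Set.mem_ofPred_eq, exists_eq_right, fiberTransversals,
    insert_subset_iff, mem_insert, hxy.symm, false_or, hx, true_and]
  refine and_congr_left fun hy => and_congr_right fun _ => forall₂_congr fun u _ => ?_
  refine ⟨fun ⟨v, hv, hvu⟩ => ⟨v, .inr hv, hvu⟩, ?_⟩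
  rintro ⟨v, rfl | hv, hvu⟩
  · exact ⟨y, hy, hf ▸ hvu⟩
  · exact ⟨v, hv, hvu⟩

theorem isToggleInvariant_transversals (hx : x ∈ τ) (hB : ∀ i, B i ⊆ τ → x ∉ B i) :
    IsToggleInvariant x (transversals B τ) := by
  intro w _
  refine and_congr (by simp [insert_subset_iff, hx]) (forall₂_congr fun i hi => ?_)
  simp [hB i hi]

theorem isToggleInvariant_transversals_inter {p : α → Prop} (hx : x ∈ τ) (hpx : ¬p x)
    (hp : ∀ i, B i ⊆ τ → x ∈ B i → ∀ y, p y → y ∈ B i) :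
    IsToggleInvariant x (transversals B τ ∩ {w | ∃ y ∈ w, p y}) := by
  intro w _
  simp only [Set.mem_inter_iff, Set.mem_ofPred_eq, transversals, insert_subset_iff,
    exists_mem_insert, hpx, hx, false_or, true_and]
  refine and_congr_left fun ⟨y, hy, hpy⟩ => and_congr_right fun _ => forall₂_congr fun i hi =>
    ⟨.inr, ?_⟩
  rintro (hxi | h)
  · exact ⟨y, hy, hp i hi hxi y hpy⟩
  · exact h

end Transversals

section TransversalHomology

open Finset

variable {α β ι : Type*} [LinearOrder α] [Fintype α] (R : Type*) [CommRing R]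

theorem homologyRank_fiberTransversals [Nontrivial R] [DecidableEq β] (f : α → β) (τ : Finset α)
    (q : ℕ) : homologyRank R (fiberTransversals f τ) q = if q = #(τ.image f) then 1 else 0 := by
  induction τ using Finset.strongInduction with
  | H τ ih =>
    by_cases hf : Set.InjOn f τ
    · rw [fiberTransversals_eq_singleton hf, homologyRank_singleton, card_image_of_injOn hf]
    · simp only [Set.InjOn, not_forall] at hf
      obtain ⟨x, hx, y, hy, hfxy, hxy⟩ := hf
      have himage : (τ.erase y).image f = τ.image f := by
        rw [← insert_erase hy, image_insert, erase_insert (notMem_erase y τ), ← hfxy,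
          insert_eq_of_mem (mem_image_of_mem f (mem_erase.2 ⟨hxy, hx⟩))]
      rw [← homologyRank_sdiff R ordConnected_fiberTransversals
        (isUpperSet_exists_mem (· = y)) (isToggleInvariant_fiberTransversals_inter hx hxy hfxy),
        fiberTransversals_sdiff hx hxy hfxy, ih _ (erase_ssubset hy), himage]

theorem homologyRank_transversals_sdiff {B : ι → Finset α} {τ : Finset α} {x : α} {p : α → Prop}
    (hx : x ∈ τ) (hpx : ¬p x) (hp : ∀ i, B i ⊆ τ → x ∈ B i → ∀ y, p y → y ∈ B i) (q : ℕ) :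
    homologyRank R (transversals B τ \ {w | ∃ y ∈ w, p y}) q =
      homologyRank R (transversals B τ) q :=
  homologyRank_sdiff R ordConnected_transversals (isUpperSet_exists_mem p)
    (isToggleInvariant_transversals_inter hx hpx hp) q

end TransversalHomology

section CyclicArcs

open Finset

variable {α : Type*} {m : ℕ}

/-- The position of `x` on the circle `ZMod m`, counted from the base point `i`. -/
def cyclicPos (c : α → ZMod m) (i : ZMod m) (x : α) : ℕ := (c x - i).val

/-- The vertices whose labels lie in the arc `{i, i + 1, …, i + L - 1}`. -/
def cyclicArc [Fintype α] (c : α → ZMod m) (L : ℕ) (i : ZMod m) : Finset α :=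
  {x | cyclicPos c i x < L}

theorem mem_cyclicArc [Fintype α] {c : α → ZMod m} {L : ℕ} {i : ZMod m} {x : α} :
    x ∈ cyclicArc c L i ↔ cyclicPos c i x < L := by
  simp [cyclicArc]

theorem exists_cyclicPos_eq {c : α → ZMod m} (hc : c.Surjective) (i : ZMod m) {j : ℕ}
    (hj : j < m) : ∃ x, cyclicPos c i x = j := by
  obtain ⟨x, hx⟩ := hc (i + j)
  exact ⟨x, by rw [cyclicPos, hx, add_sub_cancel_left, ZMod.val_natCast_of_lt hj]⟩

theorem image_cyclicPos_insert [DecidableEq α] [Fintype α] {c : α → ZMod m}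
    (hc : c.Surjective) {i : ZMod m} {x : α} {a b : ℕ} (hb : b ≤ m) (hx : cyclicPos c i x = 0) :
    (insert x ({p | a ≤ cyclicPos c i p ∧ cyclicPos c i p < b} : Finset α)).image (cyclicPos c i) =
      insert 0 (Ico a b) := by
  rw [image_insert, hx]
  congr 1
  ext j
  simp only [mem_image, mem_filter_univ, mem_Ico]
  constructor
  · rintro ⟨p, hp, rfl⟩
    exact hp
  · intro hj
    obtain ⟨p, rfl⟩ := exists_cyclicPos_eq hc i (hj.2.trans_le hb)
    exact ⟨p, hj, rfl⟩

variable [NeZero m]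

theorem cyclicPos_lt (c : α → ZMod m) (i : ZMod m) (x : α) : cyclicPos c i x < m :=
  ZMod.val_lt _

theorem exists_eq_add_natCast (i j : ZMod m) : ∃ t < m, j = i + (t : ℕ) :=
  ⟨(j - i).val, ZMod.val_lt _, by rw [ZMod.natCast_zmod_val, add_sub_cancel]⟩

theorem val_sub_natCast_lt_iff {v : ZMod m} {t L : ℕ} (ht : t < m) (hL : L ≤ m) :
    (v - (t : ℕ)).val < L ↔ (t ≤ v.val ∧ v.val < t + L) ∨ v.val + m < t + L := by
  have := v.val_lt
  have htval := ZMod.val_natCast_of_lt ht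
  rcases le_or_gt t v.val with htv | htv
  · rw [ZMod.val_sub (by rwa [htval]), htval]
    lia
  · have hadd := ZMod.val_add_val_of_le (a := v - (t : ZMod m)) (b := (t : ZMod m)) (by
      by_contra! hlt
      have := ZMod.val_add_of_lt hlt
      rw [sub_add_cancel, htval] at this
      lia)
    rw [sub_add_cancel, htval] at hadd
    lia

variable [Fintype α] {c : α → ZMod m} {i : ZMod m} {x : α}

theorem mem_cyclicArc_add {t L : ℕ} (ht : t < m) (hL : L ≤ m) :
    x ∈ cyclicArc c L (i + (t : ℕ)) ↔
      (t ≤ cyclicPos c i x ∧ cyclicPos c i x < t + L) ∨ cyclicPos c i x + m < t + L := by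
  rw [mem_cyclicArc, cyclicPos, ← sub_sub, val_sub_natCast_lt_iff ht hL, cyclicPos]

theorem cyclicArc_add_subset_iff (hc : c.Surjective) {t L L' : ℕ} (ht : t < m) (hL : 0 < L)
    (hLm : L ≤ m) (hL' : L' < m) :
    cyclicArc c L (i + (t : ℕ)) ⊆ cyclicArc c L' i ↔ t + L ≤ L' := by
  refine ⟨fun h => ?_, fun h x hx => ?_⟩
  · by_contra! hlt
    obtain ⟨x, hx⟩ := exists_cyclicPos_eq hc i ht
    obtain ⟨y, hy⟩ := exists_cyclicPos_eq hc i hL'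
    have hxL' := mem_cyclicArc.1 (h ((mem_cyclicArc_add (x := x) ht hLm).2 (.inl (by lia))))
    have hyL' := mem_cyclicArc.1 (h ((mem_cyclicArc_add (x := y) ht hLm).2 (.inl (by lia))))
    lia
  · rw [mem_cyclicArc_add ht hLm] at hx
    rw [mem_cyclicArc]
    lia

theorem cyclicArc_injective (hc : c.Surjective) {L : ℕ} (hL : 0 < L) (hLm : L < m) :
    Function.Injective (cyclicArc c L) := by
  intro i j hij
  obtain ⟨t, ht, rfl⟩ := exists_eq_add_natCast i j
  have := (cyclicArc_add_subset_iff hc ht hL hLm.le hLm).1 hij.ge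
  obtain rfl : t = 0 := by lia
  rw [Nat.cast_zero, add_zero]

theorem card_cyclicArc {L : ℕ} (hL : L ≤ m) (i : ZMod m) :
    #(cyclicArc c L i) = ∑ t ∈ range L, #{x | c x = i + (t : ℕ)} := by
  rw [card_eq_sum_card_fiberwise (t := range L) fun x hx => mem_range.2 (mem_cyclicArc.1 hx)]
  refine sum_congr rfl fun t ht => congrArg card <| ext fun x => ?_
  have htL := mem_range.1 ht
  rw [mem_filter, mem_filter_univ, mem_cyclicArc]
  refine ⟨fun ⟨_, hx⟩ => ?_, fun hx => ?_⟩
  · rw [← hx, cyclicPos, ZMod.natCast_zmod_val, add_sub_cancel]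
  · have : cyclicPos c i x = t := by
      rw [cyclicPos, hx, add_sub_cancel_left, ZMod.val_natCast_of_lt (htL.trans_le hL)]
    exact ⟨this ▸ htL, this⟩

variable {s d : ℕ} {w : Finset α}

theorem mem_transversals_cyclicArc (hc : c.Surjective) (hs : 0 < s) (hm : s + d < m) :
    w ∈ transversals (cyclicArc c s) (cyclicArc c (s + d) i) ↔
      (∀ p ∈ w, cyclicPos c i p < s + d) ∧
        ∀ t ≤ d, ∃ p ∈ w, t ≤ cyclicPos c i p ∧ cyclicPos c i p < t + s := by
  refine and_congr (forall₂_congr fun p _ => mem_cyclicArc) ⟨fun h t ht => ?_, fun h j hj => ?_⟩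
  · have htm : t < m := by lia
    obtain ⟨p, hp, hpt⟩ := h (i + (t : ℕ))
      ((cyclicArc_add_subset_iff hc htm hs (by lia) hm).2 (by lia))
    rw [mem_cyclicArc_add htm (by lia)] at hpt
    exact ⟨p, hp, hpt.resolve_right (by lia)⟩
  · obtain ⟨t, htm, rfl⟩ := exists_eq_add_natCast i j
    have ht := (cyclicArc_add_subset_iff hc htm hs (by lia) hm).1 hj
    obtain ⟨p, hp, hpt⟩ := h t (by lia)
    exact ⟨p, hp, (mem_cyclicArc_add htm (by lia)).2 (.inl hpt)⟩

theorem mem_transversals_cyclicArc_sdiff (hc : c.Surjective) (hs : 0 < s) (hd : d ≤ s)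
    (hm : s + d < m) (hx : cyclicPos c i x = 0) :
    w ∈ transversals (cyclicArc c s) (cyclicArc c (s + d) i) \
        {w | ∃ p ∈ w, p ≠ x ∧ cyclicPos c i p < s} ↔
      (∀ p ∈ w, p = x ∨ s ≤ cyclicPos c i p ∧ cyclicPos c i p < s + d) ∧ x ∈ w ∧
        (0 < d → ∃ p ∈ w, cyclicPos c i p = s) := by
  rw [Set.mem_sdiff, mem_transversals_cyclicArc hc hs hm]
  simp only [Set.mem_ofPred_eq, not_exists, not_and, not_lt]
  constructor
  · rintro ⟨⟨hw, hmeet⟩, hfar⟩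
    refine ⟨fun p hp => or_iff_not_imp_left.2 fun hpx => ⟨hfar p hp hpx, hw p hp⟩, ?_,
      fun hd' => ?_⟩
    · obtain ⟨p, hp, -, hps⟩ := hmeet 0 d.zero_le
      obtain rfl : p = x := by
        by_contra hpx
        have := hfar p hp hpx
        lia
      exact hp
    · obtain ⟨p, hp, h1p, hps⟩ := hmeet 1 hd'
      have := hfar p hp (by rintro rfl; lia)
      exact ⟨p, hp, by lia⟩
  · rintro ⟨hw, hxw, hds⟩
    refine ⟨⟨fun p hp => ?_, fun t ht => ?_⟩, fun p hp hpx => ((hw p hp).resolve_left hpx).1⟩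
    · rcases hw p hp with rfl | h <;> lia
    · rcases t.eq_zero_or_pos with rfl | ht0
      · exact ⟨x, hxw, by lia⟩
      · obtain ⟨p, hp, hps⟩ := hds (by lia)
        exact ⟨p, hp, by lia⟩

theorem isToggleInvariant_transversals_cyclicArc_sdiff [DecidableEq α] (hc : c.Surjective)
    (hs : 0 < s) (hd : d ≤ s) (hm : s + d < m) (hx : cyclicPos c i x = 0) {y : α}
    (hy : cyclicPos c i y = s + 1) (hd2 : 2 ≤ d) :
    IsToggleInvariant y (transversals (cyclicArc c s) (cyclicArc c (s + d) i) \
      {w | ∃ p ∈ w, p ≠ x ∧ cyclicPos c i p < s}) := by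
  intro w _
  have hyx : x ≠ y := by rintro rfl; lia
  have hys : cyclicPos c i y ≠ s := by lia
  have hyd : s ≤ cyclicPos c i y ∧ cyclicPos c i y < s + d := by lia
  rw [mem_transversals_cyclicArc_sdiff hc hs hd hm hx,
    mem_transversals_cyclicArc_sdiff hc hs hd hm hx]
  simp [hyx, hys, hyd]

theorem transversals_cyclicArc_sdiff_eq_fiberTransversals [DecidableEq α] (hc : c.Surjective)
    (hs : 0 < s) (hd : d ≤ 1) (hm : s + d < m) (hx : cyclicPos c i x = 0) :
    transversals (cyclicArc c s) (cyclicArc c (s + d) i) \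
        {w | ∃ p ∈ w, p ≠ x ∧ cyclicPos c i p < s} =
      fiberTransversals (cyclicPos c i)
        (insert x ({p | s ≤ cyclicPos c i p ∧ cyclicPos c i p < s + d} : Finset α)) := by
  ext w
  rw [mem_transversals_cyclicArc_sdiff hc hs (by lia) hm hx]
  simp only [fiberTransversals, Set.mem_ofPred_eq, subset_iff, mem_insert, mem_filter_univ,
    forall_eq_or_imp, hx]
  refine and_congr_right fun hw => and_congr ⟨fun h => ⟨x, h, hx⟩, ?_⟩
    ⟨fun h u hu => ?_, fun h hd0 => ?_⟩
  · rintro ⟨p, hp, hp0⟩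
    rcases hw p hp with rfl | h
    · exact hp
    · lia
  · obtain ⟨p, hp, hps⟩ := h (by lia)
    exact ⟨p, hp, by lia⟩
  · obtain ⟨y, hy⟩ := exists_cyclicPos_eq hc i (show s < m by lia)
    obtain ⟨p, hp, hpy⟩ := h y (by lia)
    exact ⟨p, hp, hpy.trans hy⟩

end CyclicArcs

section ArcHomology

open Finset

variable {α : Type*} [LinearOrder α] [Fintype α] (R : Type*) [CommRing R] [Nontrivial R]
  {m : ℕ} [NeZero m] {c : α → ZMod m} {s d : ℕ}

theorem homologyRank_transversals_cyclicArc (hc : c.Surjective) (hs : 0 < s) (hd : d ≤ s)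
    (hm : s + d < m) (i : ZMod m) (q : ℕ) :
    homologyRank R (transversals (cyclicArc c s) (cyclicArc c (s + d) i)) q =
      if d ≤ 1 ∧ q = d + 1 then 1 else 0 := by
  obtain ⟨x, hx⟩ := exists_cyclicPos_eq hc i (NeZero.pos m)
  rw [← homologyRank_transversals_sdiff R (x := x) (p := fun p => p ≠ x ∧ cyclicPos c i p < s)
    (mem_cyclicArc.2 (by lia)) (fun h => h.1 rfl)]
  · rcases le_or_gt d 1 with hd1 | hd1
    · rw [transversals_cyclicArc_sdiff_eq_fiberTransversals hc hs hd1 hm hx,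
        homologyRank_fiberTransversals, image_cyclicPos_insert hc hm.le hx,
        card_insert_of_notMem (by rw [mem_Ico]; lia), Nat.card_Ico, add_tsub_cancel_left]
      simp [hd1]
    · obtain ⟨y, hy⟩ := exists_cyclicPos_eq hc i (show s + 1 < m by lia)
      rw [if_neg (by lia)]
      exact homologyRank_eq_zero_of_isToggleInvariant R
        (isToggleInvariant_transversals_cyclicArc_sdiff hc hs hd hm hx hy hd1) q
  · intro j hj hxj p hp
    obtain ⟨t, ht, rfl⟩ := exists_eq_add_natCast i j
    have htd := (cyclicArc_add_subset_iff hc ht hs (by lia) hm).1 hj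
    rw [mem_cyclicArc_add ht (by lia)] at hxj ⊢
    lia

end ArcHomology

section EssentialMembers

open Finset

variable {α : Type*} [DecidableEq α] {F : Set (Finset α)} {x : α}

/-- The members of `F` that contain `x` and leave `F` when `x` is removed. -/
def essentialMembers (x : α) (F : Set (Finset α)) : Set (Finset α) :=
  F \ {w | w.erase x ∈ F}

theorem isUpperSet_erase_mem (hF : IsUpperSet F) : IsUpperSet {w : Finset α | w.erase x ∈ F} :=
  fun _ _ hvw hv => hF (erase_subset_erase x hvw) hv

theorem isToggleInvariant_inter_erase_mem (hF : IsUpperSet F) :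
    IsToggleInvariant x (F ∩ {w | w.erase x ∈ F}) := by
  intro w hx
  simp only [Set.mem_inter_iff, Set.mem_ofPred_eq, erase_insert hx, erase_eq_of_notMem hx,
    and_self, iff_and_self]
  exact fun hw => hF (subset_insert x w) hw

theorem homologyRank_essentialMembers {α : Type*} [LinearOrder α] [Fintype α]
    (R : Type*) [CommRing R] {F : Set (Finset α)} (x : α) (hF : IsUpperSet F) (q : ℕ) :
    homologyRank R (essentialMembers x F) q = homologyRank R F q :=
  homologyRank_sdiff R hF.ordConnected (isUpperSet_erase_mem hF)
    (isToggleInvariant_inter_erase_mem hF) q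

end EssentialMembers

section CircleTransversals

open Finset

variable {α : Type*} [Fintype α] {s : ℕ} {c : α → ZMod (2 * s + 1)} {i : ZMod (2 * s + 1)}
  {w : Finset α} {x : α}

theorem isUpperSet_transversals_univ {ι : Type*} (B : ι → Finset α) :
    IsUpperSet (transversals B univ) :=
  fun _ w hvw hv => ⟨subset_univ w, fun i hi => let ⟨y, hy, hyi⟩ := hv.2 i hi; ⟨y, hvw hy, hyi⟩⟩

theorem mem_transversals_cyclicArc_univ (i : ZMod (2 * s + 1)) :
    w ∈ transversals (cyclicArc c s) univ ↔ ∀ t ≤ 2 * s, ∃ p ∈ w,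
      (t ≤ cyclicPos c i p ∧ cyclicPos c i p < t + s) ∨ cyclicPos c i p + s + 1 < t := by
  have hmem {t : ℕ} (ht : t ≤ 2 * s) (p : α) : p ∈ cyclicArc c s (i + (t : ℕ)) ↔
      (t ≤ cyclicPos c i p ∧ cyclicPos c i p < t + s) ∨ cyclicPos c i p + s + 1 < t := by
    rw [mem_cyclicArc_add (by lia) (by lia)]
    lia
  simp only [transversals, Set.mem_ofPred_eq, subset_univ, true_and, true_imp_iff]
  refine ⟨fun h t ht => ?_, fun h j => ?_⟩
  · simpa only [hmem ht] using h (i + (t : ℕ))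
  · obtain ⟨t, ht, rfl⟩ := exists_eq_add_natCast i j
    simpa only [hmem (Nat.lt_succ_iff.1 ht)] using h t (Nat.lt_succ_iff.1 ht)

variable [DecidableEq α]

theorem mem_essentialMembers_transversals_univ (hx : cyclicPos c i x = 0) :
    w ∈ essentialMembers x (transversals (cyclicArc c s) univ) ↔
      w ∈ transversals (cyclicArc c s) univ ∧ ∃ t ≤ 2 * s, (t = 0 ∨ s + 1 < t) ∧ ∀ p ∈ w, p ≠ x →
        ¬((t ≤ cyclicPos c i p ∧ cyclicPos c i p < t + s) ∨ cyclicPos c i p + s + 1 < t) := by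
  refine and_congr_right fun hw => ?_
  rw [Set.mem_ofPred_eq, mem_transversals_cyclicArc_univ i]
  rw [mem_transversals_cyclicArc_univ i] at hw
  push Not
  refine exists_congr fun t => and_congr_right fun ht => ⟨fun h => ?_, fun h p hp => ?_⟩
  · have hmiss : ∀ p ∈ w, p ≠ x → _ := fun p hp hpx => h p (mem_erase.2 ⟨hpx, hp⟩)
    refine ⟨?_, hmiss⟩
    obtain ⟨p, hp, hpt⟩ := hw t ht
    obtain rfl : p = x := by_contra fun hpx => by have := hmiss p hp hpx; lia
    lia
  · exact h.2 p (mem_of_mem_erase hp) (ne_of_mem_erase hp)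

-- Adjoining the label `s` hits only arcs starting in `1, …, s`. Those are already hit by `p`
-- together with a vertex of the arc starting at `s + 1`, because neither of these two vertices
-- lies in the arc starting at `t` that only `x` hits.
theorem mem_transversals_of_insert_mem (hx : cyclicPos c i x = 0) {z p : α} {t : ℕ}
    (hz : cyclicPos c i z = s) (hp : p ∈ w) (hp0 : 0 < cyclicPos c i p) (hps : cyclicPos c i p < s)
    (ht : t = 0 ∨ s + 1 < t) (hmiss : ∀ p ∈ w, p ≠ x →
      ¬((t ≤ cyclicPos c i p ∧ cyclicPos c i p < t + s) ∨ cyclicPos c i p + s + 1 < t))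
    (hw : insert z w ∈ transversals (cyclicArc c s) univ) :
    w ∈ transversals (cyclicArc c s) univ := by
  rw [mem_transversals_cyclicArc_univ i] at hw ⊢
  have hpt := hmiss p hp (by rintro rfl; lia)
  obtain ⟨v, hv, hvs⟩ := hw (s + 1) (by lia)
  have hvw : v ∈ w := mem_of_mem_insert_of_ne hv (by rintro rfl; lia)
  have hvt := hmiss v hvw (by rintro rfl; lia)
  intro r hr
  obtain ⟨u, hu, hur⟩ := hw r hr
  rcases mem_insert.1 hu with rfl | huw
  · rcases le_or_gt r (cyclicPos c i p) with hrp | hrp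
    · exact ⟨p, hp, by lia⟩
    · have := cyclicPos_lt c i v
      exact ⟨v, hvw, by lia⟩
  · exact ⟨u, huw, hur⟩

theorem isToggleInvariant_essentialMembers_inter (hx : cyclicPos c i x = 0) {z : α}
    (hz : cyclicPos c i z = s) :
    IsToggleInvariant z (essentialMembers x (transversals (cyclicArc c s) univ) ∩
      {w | ∃ p ∈ w, 0 < cyclicPos c i p ∧ cyclicPos c i p < s}) := by
  intro w _
  simp only [Set.mem_inter_iff, Set.mem_ofPred_eq, exists_mem_insert, hz, lt_irrefl, and_false,
    false_or, mem_essentialMembers_transversals_univ hx, forall_mem_insert]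
  refine and_congr_left fun ⟨p, hp, hp0, hps⟩ => ⟨fun ⟨hw, t, ht, htx, hmiss⟩ => ?_,
    fun ⟨hw, t, ht, htx, _, hmiss⟩ => ?_⟩
  · exact ⟨isUpperSet_transversals_univ _ (subset_insert z w) hw, t, ht, htx, by lia, hmiss⟩
  · exact ⟨mem_transversals_of_insert_mem hx hz hp hp0 hps htx hmiss hw, t, ht, htx, hmiss⟩

theorem mem_essentialMembers_sdiff (hs : 0 < s) (hx : cyclicPos c i x = 0) :
    w ∈ essentialMembers x (transversals (cyclicArc c s) univ) \
        {w | ∃ p ∈ w, 0 < cyclicPos c i p ∧ cyclicPos c i p < s} ↔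
      (∀ p ∈ w, p = x ∨ s ≤ cyclicPos c i p) ∧ x ∈ w ∧ (∃ p ∈ w, cyclicPos c i p = s) ∧
        ∃ p ∈ w, s < cyclicPos c i p := by
  rw [Set.mem_sdiff, mem_essentialMembers_transversals_univ hx, mem_transversals_cyclicArc_univ i]
  simp only [Set.mem_ofPred_eq, not_exists, not_and, not_lt]
  constructor
  · rintro ⟨⟨hw, t, ht, htx, hmiss⟩, hfar⟩
    have hpos : ∀ p ∈ w, p = x ∨ s ≤ cyclicPos c i p := fun p hp =>
      or_iff_not_imp_left.2 fun hpx => hfar p hp (by have := hmiss p hp hpx; lia)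
    refine ⟨hpos, ?_, ?_, ?_⟩
    · obtain ⟨p, hp, hpt⟩ := hw t ht
      obtain rfl : p = x := by_contra fun hpx => hmiss p hp hpx hpt
      exact hp
    · obtain ⟨p, hp, hp1⟩ := hw 1 (by lia)
      exact ⟨p, hp, by rcases hpos p hp with rfl | h <;> lia⟩
    · obtain ⟨p, hp, hps⟩ := hw (s + 1) (by lia)
      exact ⟨p, hp, by lia⟩
  · rintro ⟨hpos, hxw, ⟨y, hyw, hy⟩, z, hzw, hz⟩
    refine ⟨⟨fun t _ => ?_, 0, by lia, .inl rfl, fun p hp hpx => ?_⟩, fun p hp hp0 => ?_⟩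
    · have := cyclicPos_lt c i z
      rcases (by lia : (t = 0 ∨ s + 1 < t) ∨ t = s + 1 ∨ 0 < t ∧ t ≤ s) with h | h | h
      · exact ⟨x, hxw, by lia⟩
      · exact ⟨z, hzw, by lia⟩
      · exact ⟨y, hyw, by lia⟩
    · have := (hpos p hp).resolve_left hpx
      lia
    · rcases hpos p hp with rfl | h <;> lia

theorem essentialMembers_sdiff_eq_fiberTransversals (hc : c.Surjective) (hs : 0 < s)
    (hx : cyclicPos c i x = 0) :
    essentialMembers x (transversals (cyclicArc c s) univ) \
        {w | ∃ p ∈ w, 0 < cyclicPos c i p ∧ cyclicPos c i p < s} =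
      fiberTransversals (fun p => min (cyclicPos c i p) (s + 1))
        (insert x ({p | s ≤ cyclicPos c i p} : Finset α)) := by
  ext w
  rw [mem_essentialMembers_sdiff hs hx]
  simp only [fiberTransversals, Set.mem_ofPred_eq, subset_iff, mem_insert, mem_filter_univ,
    forall_eq_or_imp, hx]
  refine and_congr_right fun hpos => and_congr ⟨fun h => ⟨x, h, by lia⟩, ?_⟩
    ⟨fun ⟨⟨y, hy, hys⟩, z, hz, hzs⟩ u hu => ?_, fun h => ⟨?_, ?_⟩⟩
  · rintro ⟨p, hp, hp0⟩
    rcases hpos p hp with rfl | h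
    · exact hp
    · lia
  · rcases hu.eq_or_lt with hu | hu
    · exact ⟨y, hy, by lia⟩
    · exact ⟨z, hz, by lia⟩
  · obtain ⟨y, hy⟩ := exists_cyclicPos_eq hc i (show s < 2 * s + 1 by lia)
    obtain ⟨p, hp, hpy⟩ := h y (by lia)
    exact ⟨p, hp, by lia⟩
  · obtain ⟨z, hz⟩ := exists_cyclicPos_eq hc i (show s + 1 < 2 * s + 1 by lia)
    obtain ⟨p, hp, hpz⟩ := h z (by lia)
    exact ⟨p, hp, by lia⟩

theorem image_min_cyclicPos_insert (hc : c.Surjective) (hs : 0 < s)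
    (hx : cyclicPos c i x = 0) :
    (insert x ({p | s ≤ cyclicPos c i p} : Finset α)).image
      (fun p => min (cyclicPos c i p) (s + 1)) = {0, s, s + 1} := by
  rw [image_insert, hx, Nat.zero_min]
  congr 1
  ext j
  simp only [mem_image, mem_filter_univ, mem_insert, mem_singleton]
  constructor
  · rintro ⟨p, hp, rfl⟩
    lia
  · intro hj
    obtain ⟨p, hp⟩ := exists_cyclicPos_eq hc i (show j < 2 * s + 1 by lia)
    exact ⟨p, by lia⟩

end CircleTransversals

section SphereHomology

open Finset

variable {α : Type*} [LinearOrder α] [Fintype α] (R : Type*) [CommRing R] [Nontrivial R]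

theorem homologyRank_transversals_cyclicArc_univ {s : ℕ} {c : α → ZMod (2 * s + 1)}
    (hc : c.Surjective) (hs : 0 < s) (q : ℕ) :
    homologyRank R (transversals (cyclicArc c s) univ) q = if q = 3 then 1 else 0 := by
  obtain ⟨x, hx⟩ := exists_cyclicPos_eq hc 0 (show 0 < 2 * s + 1 by lia)
  obtain ⟨z, hz⟩ := exists_cyclicPos_eq hc 0 (show s < 2 * s + 1 by lia)
  have hupper := isUpperSet_transversals_univ (cyclicArc c s)
  have hessential : (essentialMembers x (transversals (cyclicArc c s) univ)).OrdConnected :=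
    hupper.ordConnected.inter (isUpperSet_erase_mem hupper).compl.ordConnected
  rw [← homologyRank_essentialMembers R x hupper,
    ← homologyRank_sdiff R hessential
      (isUpperSet_exists_mem fun p => 0 < cyclicPos c 0 p ∧ cyclicPos c 0 p < s)
      (isToggleInvariant_essentialMembers_inter hx hz),
    essentialMembers_sdiff_eq_fiberTransversals hc hs hx, homologyRank_fiberTransversals,
    image_min_cyclicPos_insert hc hs hx, card_eq_three.2 ⟨0, s, s + 1, by lia, by lia, by lia, rfl⟩]

end SphereHomology

section BettiDegrees

open Finset

variable {α : Type*} [Fintype α] {s : ℕ} {c : α → ZMod (2 * s + 1)} {τ : Finset α}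

theorem le_of_cyclicArc_add_subset {y : α} (hy : y ∉ τ) (hs : 0 < s) {t : ℕ} (ht : t ≤ 2 * s)
    (hsub : cyclicArc c s (c y + (t : ℕ)) ⊆ τ) : 0 < t ∧ t ≤ s + 1 := by
  have hyt := mt (@hsub y) hy
  rw [mem_cyclicArc_add (Nat.lt_succ_iff.2 ht) (by lia), cyclicPos, sub_self, ZMod.val_zero] at hyt
  lia

-- Seen from a label missing in `τ`, the arcs inside `τ` start at positions `1, …, s + 1`, so any
-- two of them overlap or are adjacent, and their union is the arc spanned by the extreme two.
theorem exists_eq_cyclicArc_of_forall_mem (hne : τ.Nonempty) (huniv : τ ≠ univ)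
    (hτ : ∀ x ∈ τ, ∃ j, cyclicArc c s j ⊆ τ ∧ x ∈ cyclicArc c s j) :
    ∃ i, ∃ d ≤ s, τ = cyclicArc c (s + d) i := by
  classical
  obtain ⟨y, hy⟩ : ∃ y, y ∉ τ := by simpa [eq_univ_iff_forall] using huniv
  have hs : 0 < s := by
    obtain ⟨x, hx⟩ := hne
    obtain ⟨j, -, hxj⟩ := hτ x hx
    exact Nat.zero_lt_of_lt (mem_cyclicArc.1 hxj)
  set T : Finset ℕ := {t ∈ range (2 * s + 1) | cyclicArc c s (c y + (t : ℕ)) ⊆ τ}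
  have hT {t : ℕ} (ht : t ∈ T) : t < 2 * s + 1 ∧ cyclicArc c s (c y + (t : ℕ)) ⊆ τ := by
    simpa [T] using ht
  have hstart {t : ℕ} (ht : t ∈ T) : 0 < t ∧ t ≤ s + 1 :=
    le_of_cyclicArc_add_subset hy hs (Nat.lt_succ_iff.1 (hT ht).1) (hT ht).2
  have hcover {x : α} (hx : x ∈ τ) : ∃ t ∈ T, x ∈ cyclicArc c s (c y + (t : ℕ)) := by
    obtain ⟨j, hj, hxj⟩ := hτ x hx
    obtain ⟨t, ht, rfl⟩ := exists_eq_add_natCast (c y) j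
    exact ⟨t, mem_filter.2 ⟨mem_range.2 ht, hj⟩, hxj⟩
  have hTne : T.Nonempty := let ⟨_, hx⟩ := hne; let ⟨t, ht, _⟩ := hcover hx; ⟨t, ht⟩
  have hmin := T.min'_mem hTne
  have hmax := T.max'_mem hTne
  have := hstart hmin
  have := hstart hmax
  have hle := T.min'_le _ hmax
  refine ⟨c y + (T.min' hTne : ℕ), T.max' hTne - T.min' hTne, by lia, ext fun x => ?_⟩
  rw [mem_cyclicArc_add (hT hmin).1 (by lia)]
  refine ⟨fun hx => ?_, fun hx => ?_⟩
  · obtain ⟨t, ht, hxt⟩ := hcover hx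
    have := hstart ht
    have := T.min'_le t ht
    have := T.le_max' t ht
    rw [mem_cyclicArc_add (hT ht).1 (by lia)] at hxt
    lia
  · rcases lt_or_ge (cyclicPos c (c y) x) (T.min' hTne + s) with hlt | hge
    · exact (hT hmin).2 ((mem_cyclicArc_add (hT hmin).1 (by lia)).2 (by lia))
    · exact (hT hmax).2 ((mem_cyclicArc_add (hT hmax).1 (by lia)).2 (by lia))

/-- The multidegrees in which `Tor_r` of the Stanley–Reisner ring is nonzero, as a function of `r`.
In each of them it has rank one. -/
def bettiDegrees [DecidableEq α] (c : α → ZMod (2 * s + 1)) : ℕ → Finset (Finset α)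
  | 0 => {∅}
  | 1 => univ.image (cyclicArc c s)
  | 2 => univ.image (cyclicArc c (s + 1))
  | 3 => {univ}
  | _ => ∅

theorem transversals_cyclicArc_empty (hc : c.Surjective) (hs : 0 < s) :
    transversals (cyclicArc c s) ∅ = {∅} := by
  ext w
  refine ⟨fun hw => subset_empty.1 hw.1, ?_⟩
  rintro rfl
  refine ⟨Subset.rfl, fun i hi => ?_⟩
  obtain ⟨x, hx⟩ := exists_cyclicPos_eq hc i (show 0 < 2 * s + 1 by lia)
  exact absurd (hi (mem_cyclicArc.2 (hx.trans_lt hs))) (notMem_empty x)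

end BettiDegrees

section BettiDegreeHomology

open Finset

variable {α : Type*} [LinearOrder α] [Fintype α] (R : Type*) [CommRing R] [Nontrivial R]
  {s : ℕ} {c : α → ZMod (2 * s + 1)} {τ : Finset α}

theorem homologyRank_of_mem_bettiDegrees (hc : c.Surjective) (hs : 0 < s) {r : ℕ}
    (hτ : τ ∈ bettiDegrees c r) (q : ℕ) :
    homologyRank R (transversals (cyclicArc c s) τ) q = if q = r then 1 else 0 := by
  match r with
  | 0 =>
    rw [mem_singleton.1 hτ, transversals_cyclicArc_empty hc hs, homologyRank_singleton, card_empty]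
  | 1 =>
    obtain ⟨i, -, rfl⟩ := mem_image.1 hτ
    simpa using homologyRank_transversals_cyclicArc R hc hs s.zero_le (by lia) i q
  | 2 =>
    obtain ⟨i, -, rfl⟩ := mem_image.1 hτ
    simpa using homologyRank_transversals_cyclicArc R hc hs (d := 1) hs (by lia) i q
  | 3 => rw [mem_singleton.1 hτ, homologyRank_transversals_cyclicArc_univ R hc hs]
  | _ + 4 => exact absurd hτ (notMem_empty τ)

theorem homologyRank_eq_zero_of_forall_notMem_bettiDegrees (hc : c.Surjective) (hs : 0 < s)
    (hτ : ∀ r, τ ∉ bettiDegrees c r) (q : ℕ) :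
    homologyRank R (transversals (cyclicArc c s) τ) q = 0 := by
  by_cases hcover : ∀ x ∈ τ, ∃ j, cyclicArc c s j ⊆ τ ∧ x ∈ cyclicArc c s j
  · obtain ⟨i, d, hd, rfl⟩ := exists_eq_cyclicArc_of_forall_mem
      (nonempty_iff_ne_empty.2 fun h => hτ 0 (mem_singleton.2 h))
      (fun h => hτ 3 (mem_singleton.2 h)) hcover
    have hd0 : d ≠ 0 := by
      rintro rfl
      exact hτ 1 (mem_image_of_mem _ (mem_univ i))
    have hd1 : d ≠ 1 := by
      rintro rfl
      exact hτ 2 (mem_image_of_mem _ (mem_univ i))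
    rw [homologyRank_transversals_cyclicArc R hc hs hd (by lia), if_neg (by lia)]
  · push Not at hcover
    obtain ⟨x, hx, hxB⟩ := hcover
    exact homologyRank_eq_zero_of_isToggleInvariant R (isToggleInvariant_transversals hx hxB) q

theorem homologyRank_transversals_cyclicArc_eq_ite (hc : c.Surjective) (hs : 0 < s)
    (τ : Finset α) (q : ℕ) :
    homologyRank R (transversals (cyclicArc c s) τ) q = if τ ∈ bettiDegrees c q then 1 else 0 := by
  by_cases hτ : ∃ r, τ ∈ bettiDegrees c r
  · obtain ⟨r, hr⟩ := hτ
    by_cases hq : τ ∈ bettiDegrees c q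
    · rw [if_pos hq, homologyRank_of_mem_bettiDegrees R hc hs hq, if_pos rfl]
    · rw [if_neg hq, homologyRank_of_mem_bettiDegrees R hc hs hr,
        if_neg fun h : q = r => hq (h ▸ hr)]
  · rw [not_exists] at hτ
    rw [homologyRank_eq_zero_of_forall_notMem_bettiDegrees R hc hs hτ, if_neg (hτ q)]

end BettiDegreeHomology

section KoszulFamily

open Finset

theorem finrank_quotient_submoduleOf_map {R M M' : Type*} [Ring R] [AddCommGroup M] [Module R M]
    [AddCommGroup M'] [Module R M'] {f : M →ₗ[R] M'} (hf : Function.Injective f)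
    (Z B : Submodule R M) :
    Module.finrank R (Z.map f ⧸ (B.map f).submoduleOf (Z.map f)) =
      Module.finrank R (Z ⧸ B.submoduleOf Z) := by
  refine (Submodule.Quotient.equiv _ _ (Z.equivMapOfInjective f hf) ?_).finrank_eq.symm
  ext ⟨_, z, hz, rfl⟩
  constructor
  · rintro ⟨⟨y, hy⟩, hyB, hyz⟩
    exact ⟨y, hyB, congrArg Subtype.val hyz⟩
  · rintro ⟨y, hyB, hyz⟩
    obtain rfl := hf hyz
    exact ⟨⟨y, hz⟩, hyB, rfl⟩

variable {N : ℕ} {K : Finset (Finset (Fin N))} {τ : Finset (Fin N)} {q : ℕ}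

/-- The exterior parts `w` of the monomials `u_w v_{τ ∖ w}` of multidegree `τ` in `Λ[u] ⊗ ℚ[K]`. -/
def koszulFamily (K : Finset (Finset (Fin N))) (τ : Finset (Fin N)) : Set (Finset (Fin N)) :=
  {w | w ⊆ τ ∧ τ \ w ∈ K}

/-- Extension by zero of the coefficients of an element of `CSpace` to all exterior monomials. -/
noncomputable def extendCoeff (K : Finset (Finset (Fin N))) (τ : Finset (Fin N)) (q : ℕ) :
    CSpace N K τ q →ₗ[ℚ] (Finset (Fin N) → ℚ) :=
  Function.ExtendByZero.linearMap ℚ Subtype.val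

theorem extendCoeff_injective : Function.Injective (extendCoeff K τ q) :=
  Function.extend_injective Subtype.val_injective (0 : Finset (Fin N) → ℚ)

theorem extendCoeff_val (f : CSpace N K τ q)
    (w : {w : Finset (Fin N) // w ⊆ τ ∧ #w = q ∧ τ \ w ∈ K}) : extendCoeff K τ q f w = f w :=
  Subtype.val_injective.extend_apply _ _ _

theorem extendCoeff_mem_familyChains (f : CSpace N K τ q) :
    extendCoeff K τ q f ∈ familyChains ℚ (koszulFamily K τ) q := by
  intro w hw
  obtain ⟨⟨w, hwτ, hq, hK⟩, rfl⟩ : ∃ v : {w // w ⊆ τ ∧ #w = q ∧ τ \ w ∈ K}, v.1 = w :=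
    by_contra fun h => hw (Function.extend_apply' f (0 : Finset (Fin N) → ℚ) w h)
  exact ⟨⟨hwτ, hK⟩, hq⟩

theorem eq_zero_of_mem_familyChains_koszulFamily {z : Finset (Fin N) → ℚ} {w : Finset (Fin N)}
    (hz : z ∈ familyChains ℚ (koszulFamily K τ) q) (hw : ¬(w ⊆ τ ∧ #w = q ∧ τ \ w ∈ K)) :
    z w = 0 :=
  by_contra fun h => have ⟨⟨hwτ, hK⟩, hq⟩ := hz w h; hw ⟨hwτ, hq, hK⟩

theorem map_extendCoeff_top :
    (⊤ : Submodule ℚ (CSpace N K τ q)).map (extendCoeff K τ q) =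
      familyChains ℚ (koszulFamily K τ) q := by
  refine le_antisymm ?_ fun z hz => ⟨fun w => z w, trivial, funext fun w => ?_⟩
  · rintro _ ⟨f, -, rfl⟩
    exact extendCoeff_mem_familyChains f
  · by_cases hw : w ⊆ τ ∧ #w = q ∧ τ \ w ∈ K
    · exact extendCoeff_val _ ⟨w, hw⟩
    · rw [eq_zero_of_mem_familyChains_koszulFamily hz hw,
        eq_zero_of_mem_familyChains_koszulFamily (extendCoeff_mem_familyChains _) hw]

theorem neg_one_pow_card_filter_lt {i : Fin N} {w : Finset (Fin N)} (hi : i ∉ w) :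
    (-1 : ℚ) ^ #{x ∈ w | ∀ j ∈ insert i w \ w, x < j} = koszulSign ℚ i w := by
  rw [koszulSign, insert_sdiff_of_notMem _ hi, sdiff_self]
  simp

theorem diff_apply (f : CSpace N K τ (q + 1))
    (w : {w : Finset (Fin N) // w ⊆ τ ∧ #w = q ∧ τ \ w ∈ K}) :
    diff N K τ q f w = koszulDiff ℚ (extendCoeff K τ (q + 1) f) w := by
  let coeff (v : Finset (Fin N)) : ℚ :=
    (if w.1 ⊆ v then (-1) ^ #{x ∈ w.1 | ∀ j ∈ v \ w.1, x < j} else 0) *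
      extendCoeff K τ (q + 1) f v
  have hdiff : diff N K τ q f w = ∑ v, coeff v :=
    Fintype.sum_of_injective Subtype.val Subtype.val_injective
      (fun v => diffMat N K τ q w v * f v) coeff
      (fun v hv => mul_eq_zero_of_right _ <| eq_zero_of_mem_familyChains_koszulFamily
        (extendCoeff_mem_familyChains f) fun h => hv ⟨⟨v, h⟩, rfl⟩)
      fun v => by rw [← extendCoeff_val f v]; rfl
  rw [hdiff, koszulDiff_apply]
  refine (sum_of_injOn (insert · w.1) ?_ (fun _ _ => mem_coe.2 (mem_univ _)) ?_ ?_).symm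
  · rw [coe_compl]
    exact insert_inj_on w.1
  · intro v _ hv
    by_contra hne
    have hwv : w.1 ⊆ v := by_contra fun h => left_ne_zero_of_mul hne (if_neg h)
    have hcard := (extendCoeff_mem_familyChains f v (right_ne_zero_of_mul hne)).2
    obtain ⟨i, hi, rfl⟩ := exists_eq_insert_iff.2 ⟨hwv, by rw [w.2.2.1, hcard]⟩
    exact hv ⟨i, by simpa using hi, rfl⟩
  · intro i hi
    have hiw := mem_compl.1 hi
    simp only [coeff, subset_insert, if_true, neg_one_pow_card_filter_lt hiw]

theorem extendCoeff_diff (f : CSpace N K τ (q + 1)) :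
    extendCoeff K τ q (diff N K τ q f) =
      familyDiff ℚ (koszulFamily K τ) (extendCoeff K τ (q + 1) f) := by
  funext w
  by_cases hw : w ⊆ τ ∧ #w = q ∧ τ \ w ∈ K
  · rw [familyDiff_of_mem (F := koszulFamily K τ) ⟨hw.1, hw.2.2⟩, ← diff_apply f ⟨w, hw⟩]
    exact extendCoeff_val _ ⟨w, hw⟩
  · rw [eq_zero_of_mem_familyChains_koszulFamily (extendCoeff_mem_familyChains _) hw,
      eq_zero_of_mem_familyChains_koszulFamily
        (familyDiff_mem_familyChains (extendCoeff_mem_familyChains f)) hw]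

theorem familyChains_zero_le_ker {α R : Type*} [LinearOrder α] [Fintype α] [CommRing R]
    {F : Set (Finset α)} : familyChains R F 0 ≤ LinearMap.ker (familyDiff R F) :=
  fun _ hz => familyDiff_eq_zero_iff.2 fun w _ => koszulDiff_eq_zero fun i _ =>
    by_contra fun h => insert_ne_empty i w (card_eq_zero.1 (hz _ h).2)

theorem map_extendCoeff_cocycles :
    (cocycles N K τ q).map (extendCoeff K τ q) = familyCycles ℚ (koszulFamily K τ) q := by
  cases q with
  | zero => rw [cocycles, map_extendCoeff_top, familyCycles, inf_eq_left.2 familyChains_zero_le_ker]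
  | succ q =>
    have hker : cocycles N K τ (q + 1) =
        (LinearMap.ker (familyDiff ℚ (koszulFamily K τ))).comap (extendCoeff K τ (q + 1)) := by
      ext f
      rw [cocycles, LinearMap.mem_ker, Submodule.mem_comap, LinearMap.mem_ker, ← extendCoeff_diff,
        map_eq_zero_iff _ extendCoeff_injective]
    rw [hker, Submodule.map_comap_eq, LinearMap.range_eq_map, map_extendCoeff_top, familyCycles]

theorem map_extendCoeff_range_diff :
    (LinearMap.range (diff N K τ q)).map (extendCoeff K τ q) =
      familyBoundaries ℚ (koszulFamily K τ) q := by
  rw [familyBoundaries, ← map_extendCoeff_top, ← LinearMap.range_eq_map, ← LinearMap.range_comp,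
    ← LinearMap.range_comp]
  exact congrArg LinearMap.range (LinearMap.ext extendCoeff_diff)

theorem bettiNum_eq_sum_homologyRank (N : ℕ) (K : Finset (Finset (Fin N))) (q p : ℕ) :
    bettiNum N K q p = ∑ τ with #τ = p, homologyRank ℚ (koszulFamily K τ) q := by
  refine sum_congr rfl fun τ _ => ?_
  rw [homologyRank, ← map_extendCoeff_cocycles, ← map_extendCoeff_range_diff,
    finrank_quotient_submoduleOf_map extendCoeff_injective]
  rfl

end KoszulFamily

section GaleComplex

open Finset

theorem koszulFamily_galeComplex {m N s : ℕ} [NeZero m] (c : Fin N → ZMod m) (hs : 0 < s)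
    (τ : Finset (Fin N)) :
    koszulFamily (galeComplex (s + 1) m N c) τ = transversals (cyclicArc c s) τ := by
  have hval (i : ZMod m) (x : Fin N) : (c x - i).val ≤ s + 1 - 2 ↔ x ∈ cyclicArc c s i := by
    rw [mem_cyclicArc, cyclicPos]
    lia
  ext w
  refine and_congr_right fun _ => ?_
  simp only [galeComplex, mem_filter_univ, hval, mem_sdiff, subset_iff, not_exists]
  exact forall_congr' fun i => by grind

theorem card_filter_image_cyclicArc {α : Type*} [Fintype α] [DecidableEq α] {m : ℕ} [NeZero m]
    {c : α → ZMod m} (hc : c.Surjective) {L : ℕ} (hL : 0 < L) (hLm : L < m) (j : ℕ) :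
    #{τ ∈ univ.image (cyclicArc c L) | #τ = j} =
      #{i | ∑ t ∈ range L, #{x | c x = i + (t : ℕ)} = j} := by
  rw [filter_image, card_image_of_injective _ (cyclicArc_injective hc hL hLm)]
  simp only [card_cyclicArc hLm.le]

theorem card_image_cyclicArc {α : Type*} [Fintype α] [DecidableEq α] {m : ℕ} [NeZero m]
    {c : α → ZMod m} (hc : c.Surjective) {L : ℕ} (hL : 0 < L) (hLm : L < m) :
    #(univ.image (cyclicArc c L)) = m := by
  rw [card_image_of_injective _ (cyclicArc_injective hc hL hLm), card_univ, ZMod.card]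

variable {N s : ℕ} {c : Fin N → ZMod (2 * s + 1)}

theorem bettiNum_galeComplex (hc : c.Surjective) (hs : 0 < s) (q p : ℕ) :
    bettiNum N (galeComplex (s + 1) (2 * s + 1) N c) q p = #{τ ∈ bettiDegrees c q | #τ = p} := by
  simp only [bettiNum_eq_sum_homologyRank, koszulFamily_galeComplex c hs,
    homologyRank_transversals_cyclicArc_eq_ite ℚ hc hs, sum_boole, filter_filter, Nat.cast_id]
  exact congrArg card (ext fun τ => by simp [and_comm])

theorem sum_bettiNum_galeComplex (hc : c.Surjective) (hs : 0 < s) (q : ℕ) :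
    ∑ j ∈ range (N + 1), bettiNum N (galeComplex (s + 1) (2 * s + 1) N c) q j =
      #(bettiDegrees c q) := by
  simp only [bettiNum_galeComplex hc hs]
  exact (card_eq_sum_card_fiberwise fun τ _ =>
    mem_coe.2 (mem_range_succ_iff.2 ((card_le_univ τ).trans_eq (Fintype.card_fin N)))).symm

theorem bettiNum_galeComplex_eq_zero (hc : c.Surjective) (hs : 0 < s) {q p : ℕ} (h1 : q ≠ 1)
    (h2 : q ≠ 2) (h0 : (q, p) ≠ (0, 0)) (h3 : (q, p) ≠ (3, N)) :
    bettiNum N (galeComplex (s + 1) (2 * s + 1) N c) q p = 0 := by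
  rw [bettiNum_galeComplex hc hs, card_eq_zero, filter_eq_empty_iff]
  rintro τ hτ rfl
  match q with
  | 0 => exact h0 (by rw [mem_singleton.1 hτ, card_empty])
  | 1 => exact h1 rfl
  | 2 => exact h2 rfl
  | 3 => exact h3 (by rw [mem_singleton.1 hτ, card_univ, Fintype.card_fin])
  | _ + 4 => exact notMem_empty τ hτ

end GaleComplex

/-- Bigraded Betti numbers of the moment-angle manifold of `P = P_{a₁,...,a_{2k-1}}`:
`β^{0,0} = 1`; `β^{-1,2j} = #{i : aᵢ + ⋯ + a_{i+k-2} = j}`;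
`β^{-2,2j} = #{i : aᵢ + ⋯ + a_{i+k-1} = j}`; `β^{-3,2(n+3)} = 1`; all others vanish.
In particular `∑ⱼ β^{-1,2j} = ∑ⱼ β^{-2,2j} = 2k - 1`. -/
theorem bigraded_betti_numbers_of_n_plus_three_facets (k m' : ℕ) [NeZero m']
    (hk : 2 ≤ k) (hm : m' = 2 * k - 1) (a : ZMod m' → ℕ) (ha : ∀ i, 1 ≤ a i)
    (n N : ℕ) (hN : N = n + 3) (hn : n + 3 = ∑ i, a i)
    (c : Fin N → ZMod m')
    (hc : ∀ i : ZMod m', (Finset.univ.filter (fun x => c x = i)).card = a i) :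
    bettiNum N (galeComplex k m' N c) 0 0 = 1 ∧
    (∀ j : ℕ, bettiNum N (galeComplex k m' N c) 1 j =
      (Finset.univ.filter (fun i : ZMod m' =>
        (∑ t ∈ Finset.range (k - 1), a (i + (t : ZMod m'))) = j)).card) ∧
    (∀ j : ℕ, bettiNum N (galeComplex k m' N c) 2 j =
      (Finset.univ.filter (fun i : ZMod m' =>
        (∑ t ∈ Finset.range k, a (i + (t : ZMod m'))) = j)).card) ∧
    bettiNum N (galeComplex k m' N c) 3 (n + 3) = 1 ∧
    (∀ q p : ℕ, q ≠ 1 → q ≠ 2 → (q, p) ≠ (0, 0) → (q, p) ≠ (3, n + 3) →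
      bettiNum N (galeComplex k m' N c) q p = 0) ∧
    (∑ j ∈ Finset.range (n + 4), bettiNum N (galeComplex k m' N c) 1 j) = 2 * k - 1 ∧
    (∑ j ∈ Finset.range (n + 4), bettiNum N (galeComplex k m' N c) 2 j) = 2 * k - 1 := by
  obtain ⟨s, rfl⟩ : ∃ s, k = s + 1 := ⟨k - 1, by lia⟩
  obtain rfl : m' = 2 * s + 1 := by lia
  have hs : 0 < s := by lia
  have hsurj : c.Surjective := fun i => by
    obtain ⟨x, hx⟩ := Finset.card_pos.1 ((hc i).symm ▸ ha i)
    exact ⟨x, (Finset.mem_filter.1 hx).2⟩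
  subst hN
  have hbetti := bettiNum_galeComplex hsurj hs
  have hsum := sum_bettiNum_galeComplex hsurj hs
  simp only [← hc]
  refine ⟨?_, fun j => ?_, fun j => ?_, ?_, fun _ _ => bettiNum_galeComplex_eq_zero hsurj hs,
    ?_, ?_⟩
  · simp [hbetti, bettiDegrees, Finset.filter_singleton]
  · exact (hbetti 1 j).trans (card_filter_image_cyclicArc hsurj hs (by lia) j)
  · exact (hbetti 2 j).trans (card_filter_image_cyclicArc hsurj s.succ_pos (by lia) j)
  · simp [hbetti, bettiDegrees, Finset.filter_singleton]
  · exact ((hsum 1).trans (card_image_cyclicArc hsurj hs (by lia))).trans (by lia)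
  · exact ((hsum 2).trans (card_image_cyclicArc hsurj s.succ_pos (by lia))).trans (by lia)
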